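/- arXiv:1808.02329 — 7 statements merged into one kernel-verified Lean document; each statement's English description precedes it below -/
import Mathlib

section
/- Let Y be a metric space and let the additive group ℝ act on Y by isometries, in such a way that for a fixed point q ∈ Y the orbit map t ↦ t·q is continuous. Let η > 0. Suppose there exist v ∈ ℝ and a positive integer k such that the finite set A·q := {(j·v)·q : j ∈ ℤ, |j| ≤ k} has positive diameter and the Hausdorff distance between A·q and A²·q := {(2j·v)·q : j ∈ ℤ, |j| ≤ k} is strictly less than η·diam(A·q). Then there exists w ∈ ℝ such that the set B·q := {(t·w)·q : t ∈ [−1,1]} has diameter in (0,∞) and the Hausdorff distance between B·q and B²·q := {(2t·w)·q : t ∈ [−1,1]} is strictly less than η·diam(B·q). (This is the implication (1) ⟹ (2) of Lemma 3.4 of the paper, for the group ℝ.) -/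
/-- Lemma 3.4 of the paper, implication (1) ⟹ (2), for the group `ℝ`:
if the `ℝ`-action on `Y` by isometries has an `η`-almost subgroup of
one-parameter of form I at `q`, then it has one of form II. -/
theorem form_I_implies_form_II {Y : Type*} [MetricSpace Y] [AddAction ℝ Y]
    (hiso : ∀ t : ℝ, Isometry (fun y : Y => t +ᵥ y))
    (q : Y) (hcont : Continuous (fun t : ℝ => t +ᵥ q))
    (η : ℝ) (hη : 0 < η)
    (h : ∃ (v : ℝ) (k : ℕ), 0 < k ∧
      0 < Metric.diam {y : Y | ∃ j : ℤ, |j| ≤ (k : ℤ) ∧ y = ((j : ℝ) * v) +ᵥ q} ∧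
      Metric.hausdorffDist
          {y : Y | ∃ j : ℤ, |j| ≤ (k : ℤ) ∧ y = ((j : ℝ) * v) +ᵥ q}
          {y : Y | ∃ j : ℤ, |j| ≤ (k : ℤ) ∧ y = ((2 * (j : ℝ)) * v) +ᵥ q}
        < η * Metric.diam {y : Y | ∃ j : ℤ, |j| ≤ (k : ℤ) ∧ y = ((j : ℝ) * v) +ᵥ q}) :
    ∃ w : ℝ,
      0 < Metric.diam {y : Y | ∃ t ∈ Set.Icc (-1 : ℝ) 1, y = (t * w) +ᵥ q} ∧
      Metric.hausdorffDist
          {y : Y | ∃ t ∈ Set.Icc (-1 : ℝ) 1, y = (t * w) +ᵥ q}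
          {y : Y | ∃ t ∈ Set.Icc (-1 : ℝ) 1, y = ((2 * t) * w) +ᵥ q}
        < η * Metric.diam {y : Y | ∃ t ∈ Set.Icc (-1 : ℝ) 1, y = (t * w) +ᵥ q} := by
  obtain ⟨v, k, hk, hD, hH⟩ := h
  have hk' : (1 : ℝ) ≤ k := by exact_mod_cast hk
  -- orbit pieces over bounded intervals are bounded
  have hbdd : ∀ (M : ℝ) (S : Set Y), (∀ y ∈ S, ∃ t : ℝ, |t| ≤ M ∧ y = t +ᵥ q) →
      Bornology.IsBounded S := by
    intro M S hS
    refine ((isCompact_Icc (a := -M) (b := M)).image hcont).isBounded.subset ?_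
    intro y hy
    obtain ⟨t, ht, rfl⟩ := hS y hy
    exact ⟨t, abs_le.mp ht, rfl⟩
  have hshift : ∀ a b c : ℝ, dist ((a + c) +ᵥ q) ((b + c) +ᵥ q) = dist (a +ᵥ q) (b +ᵥ q) := by
    intro a b c
    rw [add_comm a c, add_comm b c, add_vadd, add_vadd]
    exact (hiso c).dist_eq _ _
  have hjk : ∀ j : ℤ, |j| ≤ (k : ℤ) → |(j : ℝ)| ≤ k := by
    intro j hj
    exact_mod_cast hj
  have hfin : Metric.hausdorffEDist
      {y : Y | ∃ j : ℤ, |j| ≤ (k : ℤ) ∧ y = ((j : ℝ) * v) +ᵥ q}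
      {y : Y | ∃ j : ℤ, |j| ≤ (k : ℤ) ∧ y = ((2 * (j : ℝ)) * v) +ᵥ q} ≠ ⊤ := by
    apply Metric.hausdorffEDist_ne_top_of_nonempty_of_bounded
    · exact ⟨_, 0, by simp, rfl⟩
    · exact ⟨_, 0, by simp, rfl⟩
    · apply hbdd (k * |v|)
      rintro y ⟨j, hj, rfl⟩
      refine ⟨_, ?_, rfl⟩
      rw [abs_mul]
      exact mul_le_mul_of_nonneg_right (hjk j hj) (abs_nonneg v)
    · apply hbdd (2 * k * |v|)
      rintro y ⟨j, hj, rfl⟩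
      refine ⟨_, ?_, rfl⟩
      rw [abs_mul, abs_mul, abs_two]
      exact mul_le_mul_of_nonneg_right (by linarith [hjk j hj]) (abs_nonneg v)
  have hkm : ((2 * ((k : ℤ) : ℝ)) * v) +ᵥ q ∈
      {y : Y | ∃ j : ℤ, |j| ≤ (k : ℤ) ∧ y = ((2 * (j : ℝ)) * v) +ᵥ q} :=
    ⟨(k : ℤ), by simp, rfl⟩
  obtain ⟨x, ⟨j, hj, rfl⟩, hx⟩ := Metric.exists_dist_lt_of_hausdorffDist_lt'
    hkm hH hfin
  have hj1 := abs_le.mp (hjk j hj)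
  set c : ℝ := 2 * k - j with hc
  have hck : (k : ℝ) ≤ c := by linarith [hj1.2]
  have hc0 : 0 < c := by linarith
  have hw : dist ((0 : ℝ) +ᵥ q) ((c * v) +ᵥ q) < η *
      Metric.diam {y : Y | ∃ j : ℤ, |j| ≤ (k : ℤ) ∧ y = ((j : ℝ) * v) +ᵥ q} := by
    rw [← hshift 0 (c * v) (j * v)]
    convert hx using 3
    · ring
    · rw [hc]; push_cast; ring
  have hsub : {y : Y | ∃ j : ℤ, |j| ≤ (k : ℤ) ∧ y = ((j : ℝ) * v) +ᵥ q} ⊆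
      {y : Y | ∃ t ∈ Set.Icc (-1 : ℝ) 1, y = (t * (c * v)) +ᵥ q} := by
    rintro y ⟨i, hi, rfl⟩
    have hi1 := abs_le.mp (hjk i hi)
    refine ⟨i / c, ⟨?_, ?_⟩, ?_⟩
    · rw [le_div_iff₀ hc0]; linarith [hi1.1]
    · rw [div_le_iff₀ hc0]; linarith [hi1.2]
    · congr 1
      field_simp
  have hdiam := Metric.diam_mono hsub (hbdd |c * v| _ (by
    rintro y ⟨t, ht, rfl⟩
    refine ⟨_, ?_, rfl⟩
    rw [abs_mul]
    exact mul_le_of_le_one_left (abs_nonneg _) (abs_le.mpr ht)))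
  refine ⟨c * v, hD.trans_le hdiam, ?_⟩
  refine lt_of_le_of_lt ?_ (hw.trans_le (mul_le_mul_of_nonneg_left hdiam hη.le))
  apply Metric.hausdorffDist_le_of_mem_dist dist_nonneg
  · rintro x ⟨t, ht, rfl⟩
    refine ⟨_, ⟨t / 2, ⟨by linarith [ht.1], by linarith [ht.2]⟩, rfl⟩, ?_⟩
    rw [show 2 * (t / 2) = t by ring, dist_self]
    exact dist_nonneg
  · rintro x ⟨t, ht, rfl⟩
    rcases le_total (2 * t) 1 with h1 | h1
    · rcases le_total (-1) (2 * t) with h2 | h2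
      · refine ⟨_, ⟨2 * t, ⟨h2, h1⟩, rfl⟩, ?_⟩
        rw [dist_self]
        exact dist_nonneg
      · refine ⟨_, ⟨2 * t + 1, ⟨by linarith [ht.1], by linarith⟩, rfl⟩, ?_⟩
        rw [← hshift 0 (c * v) (2 * t * (c * v))]
        apply le_of_eq
        congr 2 <;> ring
    · refine ⟨_, ⟨2 * t - 1, ⟨by linarith, by linarith [ht.2]⟩, rfl⟩, ?_⟩
      rw [← hshift 0 (c * v) ((2 * t - 1) * (c * v)), dist_comm]
      apply le_of_eq
      congr 2 <;> ring
end

section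
/- Let Y be a metric space and let the additive group ℝ act on Y by isometries, in such a way that for a fixed point q ∈ Y the orbit map t ↦ t·q is continuous. Let η > 0. Suppose there exists w ∈ ℝ such that the set B·q := {(t·w)·q : t ∈ [−1,1]} has positive diameter and the Hausdorff distance between B·q and B²·q := {(2t·w)·q : t ∈ [−1,1]} is strictly less than η·diam(B·q). Then there exist v ∈ ℝ and a positive integer k such that the finite set A·q := {(j·v)·q : j ∈ ℤ, |j| ≤ k} has positive diameter and the Hausdorff distance between A·q and A²·q := {(2j·v)·q : j ∈ ℤ, |j| ≤ k} is strictly less than η·diam(A·q). (This is the implication (2) ⟹ (1) of Lemma 3.4 of the paper, for the group ℝ.) -/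
/-- Lemma 3.4 of the paper, implication (2) ⟹ (1), for the group `ℝ`:
if the `ℝ`-action on `Y` by isometries has an `η`-almost subgroup of
one-parameter of form II at `q`, then it has one of form I. -/
theorem form_II_implies_form_I {Y : Type*} [MetricSpace Y] [AddAction ℝ Y]
    (hiso : ∀ t : ℝ, Isometry (fun y : Y => t +ᵥ y))
    (q : Y) (hcont : Continuous (fun t : ℝ => t +ᵥ q))
    (η : ℝ) (hη : 0 < η)
    (h : ∃ w : ℝ,
      0 < Metric.diam {y : Y | ∃ t ∈ Set.Icc (-1 : ℝ) 1, y = (t * w) +ᵥ q} ∧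
      Metric.hausdorffDist
          {y : Y | ∃ t ∈ Set.Icc (-1 : ℝ) 1, y = (t * w) +ᵥ q}
          {y : Y | ∃ t ∈ Set.Icc (-1 : ℝ) 1, y = ((2 * t) * w) +ᵥ q}
        < η * Metric.diam {y : Y | ∃ t ∈ Set.Icc (-1 : ℝ) 1, y = (t * w) +ᵥ q}) :
    ∃ (v : ℝ) (k : ℕ), 0 < k ∧
      0 < Metric.diam {y : Y | ∃ j : ℤ, |j| ≤ (k : ℤ) ∧ y = ((j : ℝ) * v) +ᵥ q} ∧
      Metric.hausdorffDist
          {y : Y | ∃ j : ℤ, |j| ≤ (k : ℤ) ∧ y = ((j : ℝ) * v) +ᵥ q}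
          {y : Y | ∃ j : ℤ, |j| ≤ (k : ℤ) ∧ y = ((2 * (j : ℝ)) * v) +ᵥ q}
        < η * Metric.diam {y : Y | ∃ j : ℤ, |j| ≤ (k : ℤ) ∧ y = ((j : ℝ) * v) +ᵥ q} := by
  obtain ⟨w, hd, hH⟩ := h
  set B := {y : Y | ∃ t ∈ Set.Icc (-1 : ℝ) 1, y = (t * w) +ᵥ q} with hB
  set B2 := {y : Y | ∃ t ∈ Set.Icc (-1 : ℝ) 1, y = ((2 * t) * w) +ᵥ q} with hB2
  have hBb : Bornology.IsBounded B := by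
    have hc : Continuous (fun t : ℝ => (t * w) +ᵥ q) :=
      hcont.comp (continuous_id.mul continuous_const)
    refine ((isCompact_Icc (a := (-1 : ℝ)) (b := 1)).image hc).isBounded.subset ?_
    rintro y ⟨t, ht, rfl⟩
    exact ⟨t, ht, rfl⟩
  have hB2b : Bornology.IsBounded B2 := by
    have hc : Continuous (fun t : ℝ => ((2 * t) * w) +ᵥ q) :=
      hcont.comp ((continuous_const.mul continuous_id).mul continuous_const)
    refine ((isCompact_Icc (a := (-1 : ℝ)) (b := 1)).image hc).isBounded.subset ?_
    rintro y ⟨t, ht, rfl⟩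
    exact ⟨t, ht, rfl⟩
  set D := Metric.diam B with hD
  set H := Metric.hausdorffDist B B2 with hHd
  obtain ⟨ε, hε, hε1, hε2⟩ : ∃ ε : ℝ, 0 < ε ∧ 2 * ε < D ∧ H + 2 * ε < η * (D - 2 * ε) := by
    have hg : 0 < η * D - H := by linarith
    have h2 : 0 < 4 * (1 + η) := by linarith
    refine ⟨min (D / 4) ((η * D - H) / (4 * (1 + η))), lt_min (by linarith) (div_pos hg h2), ?_, ?_⟩
    · have := min_le_left (D / 4) ((η * D - H) / (4 * (1 + η)))
      linarith
    · have := min_le_right (D / 4) ((η * D - H) / (4 * (1 + η)))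
      rw [le_div_iff₀ h2] at this
      nlinarith
  obtain ⟨δ, hδ, hδε⟩ := Metric.continuous_iff.1 hcont 0 ε hε
  have hclose : ∀ s t : ℝ, |s - t| < δ → dist (s +ᵥ q) (t +ᵥ q) ≤ ε := by
    intro s t hst
    have h1 : s +ᵥ q = t +ᵥ ((s - t) +ᵥ q) := by
      rw [← add_vadd]; congr 1; ring
    have h2 := hδε (s - t) (by simpa [Real.dist_eq] using hst)
    rw [zero_vadd] at h2
    rw [h1]
    have h3 := (hiso t).dist_eq ((s - t) +ᵥ q) q
    rw [h3]
    exact h2.le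
  obtain ⟨k, hk⟩ := exists_nat_gt (2 * |w| / δ)
  have hk0 : (0 : ℝ) < k := lt_of_le_of_lt (by positivity) hk
  have hkw : 2 * |w| < k * δ := by rwa [div_lt_iff₀ hδ] at hk
  have hkn : 0 < k := by exact_mod_cast hk0
  -- rounding
  have hround : ∀ t ∈ Set.Icc (-1 : ℝ) 1, ∃ j : ℤ, |j| ≤ (k : ℤ) ∧ |t - j / k| * k ≤ 1 := by
    rintro t ⟨ht1, ht2⟩
    refine ⟨⌊t * k⌋, ?_, ?_⟩
    · rw [abs_le]
      constructor
      · rw [Int.le_floor]; push_cast; nlinarith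
      · have h1 := Int.floor_le (t * k)
        have : ((⌊t * k⌋ : ℤ) : ℝ) ≤ ((k : ℤ) : ℝ) := by push_cast; nlinarith
        exact_mod_cast this
    · have h1 := Int.floor_le (t * k)
      have h2 := Int.lt_floor_add_one (t * k)
      rw [← abs_of_pos hk0, ← abs_mul, abs_of_pos hk0, sub_mul, div_mul_cancel₀ _ hk0.ne', abs_le]
      constructor <;> linarith
  have hmem : ∀ j : ℤ, |j| ≤ (k : ℤ) → (j / k : ℝ) ∈ Set.Icc (-1 : ℝ) 1 := by
    intro j hj
    have : |(j : ℝ)| ≤ k := by exact_mod_cast hj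
    rw [abs_le] at this
    constructor
    · rw [le_div_iff₀ hk0]; linarith
    · rw [div_le_iff₀ hk0]; linarith
  have hsmall : ∀ (c t x : ℝ), |c| ≤ 2 → |t - x| * k ≤ 1 → |c * t * w - c * x * w| < δ := by
    intro c t x hc hx
    have e : c * t * w - c * x * w = c * w * (t - x) := by ring
    rw [e, abs_mul, abs_mul]
    have h1 : |c| * |w| ≤ 2 * |w| := mul_le_mul_of_nonneg_right hc (abs_nonneg _)
    have h2 : |c| * |w| * |t - x| * k < δ * k := by
      calc |c| * |w| * |t - x| * k = |c| * |w| * (|t - x| * k) := by ring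
        _ ≤ |c| * |w| * 1 := mul_le_mul_of_nonneg_left hx (by positivity)
        _ < δ * k := by linarith
    exact lt_of_mul_lt_mul_right h2 hk0.le
  refine ⟨w / k, k, hkn, ?_⟩
  set A := {y : Y | ∃ j : ℤ, |j| ≤ (k : ℤ) ∧ y = ((j : ℝ) * (w / k)) +ᵥ q} with hA
  set A2 := {y : Y | ∃ j : ℤ, |j| ≤ (k : ℤ) ∧ y = ((2 * (j : ℝ)) * (w / k)) +ᵥ q} with hA2
  have hAB : A ⊆ B := by
    rintro y ⟨j, hj, rfl⟩
    exact ⟨j / k, hmem j hj, by congr 1; ring⟩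
  have hAB2 : A2 ⊆ B2 := by
    rintro y ⟨j, hj, rfl⟩
    exact ⟨j / k, hmem j hj, by congr 1; ring⟩
  have hBA : ∀ y ∈ B, ∃ z ∈ A, dist y z ≤ ε := by
    rintro y ⟨t, ht, rfl⟩
    obtain ⟨j, hj, hjt⟩ := hround t ht
    refine ⟨_, ⟨j, hj, rfl⟩, hclose _ _ ?_⟩
    have := hsmall 1 t (j / k) (by norm_num) hjt
    convert this using 2
    ring
  have hBA2 : ∀ y ∈ B2, ∃ z ∈ A2, dist y z ≤ ε := by
    rintro y ⟨t, ht, rfl⟩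
    obtain ⟨j, hj, hjt⟩ := hround t ht
    refine ⟨_, ⟨j, hj, rfl⟩, hclose _ _ ?_⟩
    have := hsmall 2 t (j / k) (by norm_num) hjt
    convert this using 2
    ring
  have hAne : A.Nonempty := ⟨_, 0, by simp, rfl⟩
  have hA2ne : A2.Nonempty := ⟨_, 0, by simp, rfl⟩
  have hBne : B.Nonempty := hAne.mono hAB
  have hB2ne : B2.Nonempty := hA2ne.mono hAB2
  have hAb := hBb.subset hAB
  have hA2b := hB2b.subset hAB2
  have d1 : Metric.hausdorffDist A B ≤ ε :=
    Metric.hausdorffDist_le_of_mem_dist hε.le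
      (fun x hx => ⟨x, hAB hx, by simpa using hε.le⟩) hBA
  have d2 : Metric.hausdorffDist B2 A2 ≤ ε :=
    Metric.hausdorffDist_le_of_mem_dist hε.le hBA2
      (fun x hx => ⟨x, hAB2 hx, by simpa using hε.le⟩)
  have t1 : Metric.hausdorffDist A A2 ≤ Metric.hausdorffDist A B + Metric.hausdorffDist B A2 :=
    Metric.hausdorffDist_triangle
      (Metric.hausdorffEDist_ne_top_of_nonempty_of_bounded hAne hBne hAb hBb)
  have t2 : Metric.hausdorffDist B A2 ≤ H + Metric.hausdorffDist B2 A2 :=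
    Metric.hausdorffDist_triangle
      (Metric.hausdorffEDist_ne_top_of_nonempty_of_bounded hBne hB2ne hBb hB2b)
  have hdiam : D ≤ Metric.diam A + 2 * ε := by
    refine Metric.diam_le_of_forall_dist_le (by have := Metric.diam_nonneg (s := A); linarith) ?_
    intro x hx y hy
    obtain ⟨x', hx', hxx⟩ := hBA x hx
    obtain ⟨y', hy', hyy⟩ := hBA y hy
    have h1 := Metric.dist_le_diam_of_mem hAb hx' hy'
    have h2 := dist_triangle4 x x' y' y
    rw [dist_comm y' y] at h2
    linarith
  refine ⟨by linarith, ?_⟩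
  have : η * (D - 2 * ε) ≤ η * Metric.diam A := mul_le_mul_of_nonneg_left (by linarith) hη.le
  linarith
end

section
/- Let Y be a metric space, g a surjective isometry of Y, q ∈ Y, and η, r > 0. Assume d(q, g(q)) ≥ r, and assume that for every positive integer k one has max_{i ∈ ℤ, |i| ≤ k} dist(g^{2i}(q), A_k·q) ≥ η·diam(A_k·q), where A_k·q := {g^m(q) : m ∈ ℤ, |m| ≤ k}. Then d(q, g^j(q)) ≥ η·r for every nonzero integer j; consequently the orbit points g^i(q), i ∈ ℤ, are pairwise at distance at least η·r from each other. (This is part (1) of Lemma 3.8 of the paper, with the almost-subgroup defect measured by the one-sided Hausdorff excess.) -/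
/-- Lemma 3.8(1) of the paper: if the cyclic group generated by a surjective
isometry `g` has no `η`-almost subgroup of one-parameter at `q` (measured with
the one-sided Hausdorff excess), and `d(q, gq) ≥ r`, then all orbit points of
`⟨g⟩` at `q` are `η·r`-separated. -/
theorem no_small_almost_subgroup_separation {Y : Type*} [MetricSpace Y]
    (g : Y ≃ᵢ Y) (q : Y) (η r : ℝ) (hη : 0 < η) (hr : 0 < r)
    (hdisp : r ≤ dist q (g q))
    (hns : ∀ k : ℕ, 0 < k → ∃ i : ℤ, |i| ≤ (k : ℤ) ∧
      η * Metric.diam {y : Y | ∃ m : ℤ, |m| ≤ (k : ℤ) ∧ y = (g ^ m) q}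
        ≤ Metric.infDist ((g ^ (2 * i)) q)
            {y : Y | ∃ m : ℤ, |m| ≤ (k : ℤ) ∧ y = (g ^ m) q}) :
    (∀ j : ℤ, j ≠ 0 → η * r ≤ dist q ((g ^ j) q)) ∧
    (∀ i j : ℤ, i ≠ j → η * r ≤ dist ((g ^ i) q) ((g ^ j) q)) := by
  have hshift : ∀ a b : ℤ, dist ((g ^ a) q) ((g ^ b) q) = dist q ((g ^ (b - a)) q) := by
    intro a b
    have h : (g ^ b) q = (g ^ a) ((g ^ (b - a)) q) := by
      rw [← IsometryEquiv.mul_apply, ← zpow_add]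
      congr 2
      ring
    rw [h, (g ^ a).isometry.dist_eq]
  have hneg : ∀ a : ℤ, dist q ((g ^ (-a)) q) = dist q ((g ^ a) q) := by
    intro a
    have h := hshift a 0
    rw [zero_sub] at h
    rw [← h, dist_comm]
    simp
  have hpos : ∀ n : ℕ, 0 < n → η * r ≤ dist q ((g ^ (n : ℤ)) q) := by
    intro n hn
    obtain ⟨i, hi, h⟩ := hns n hn
    have hfin : {y : Y | ∃ m : ℤ, |m| ≤ (n : ℤ) ∧ y = (g ^ m) q}.Finite := by
      refine ((Set.finite_Icc (-(n : ℤ)) n).image (fun m : ℤ => (g ^ m) q)).subset ?_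
      rintro y ⟨m, hm, rfl⟩
      exact ⟨m, abs_le.mp hm, rfl⟩
    have hd : r ≤ Metric.diam {y : Y | ∃ m : ℤ, |m| ≤ (n : ℤ) ∧ y = (g ^ m) q} := by
      refine hdisp.trans (Metric.dist_le_diam_of_mem hfin.isBounded ⟨0, by simp, by simp⟩ ⟨1, ?_, by simp⟩)
      rw [abs_one]
      omega
    refine (mul_le_mul_of_nonneg_left hd hη.le).trans (h.trans ?_)
    rw [abs_le] at hi
    rcases le_total 0 i with h0 | h0
    · have hm : (g ^ (2 * i - n)) q ∈ {y : Y | ∃ m : ℤ, |m| ≤ (n : ℤ) ∧ y = (g ^ m) q} :=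
        ⟨2 * i - n, abs_le.mpr ⟨by omega, by omega⟩, rfl⟩
      refine (Metric.infDist_le_dist_of_mem hm).trans ?_
      rw [hshift, ← hneg n]
      apply le_of_eq
      congr 3
      ring
    · have hm : (g ^ (2 * i + n)) q ∈ {y : Y | ∃ m : ℤ, |m| ≤ (n : ℤ) ∧ y = (g ^ m) q} :=
        ⟨2 * i + n, abs_le.mpr ⟨by omega, by omega⟩, rfl⟩
      refine (Metric.infDist_le_dist_of_mem hm).trans ?_
      rw [hshift]
      apply le_of_eq
      congr 3
      ring
  have hall : ∀ j : ℤ, j ≠ 0 → η * r ≤ dist q ((g ^ j) q) := by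
    intro j hj
    have h := hpos j.natAbs (Int.natAbs_pos.mpr hj)
    rcases Int.natAbs_eq j with h1 | h1
    · rw [h1]
      exact h
    · rw [h1, hneg]
      exact h
  refine ⟨hall, fun i j hij => ?_⟩
  rw [hshift]
  exact hall _ (by omega)
end

section
/- Let Y be a metric space, g a surjective isometry of Y, q ∈ Y, η > 0, N a positive integer, and R ≥ 0. Assume d(q, g^N(q)) ≤ R, and assume max_{i ∈ ℤ, |i| ≤ N} dist(g^{2i}(q), A_N·q) ≥ η·diam(A_N·q), where A_N·q := {g^m(q) : m ∈ ℤ, |m| ≤ N}. Then diam(A_N·q) ≤ R/η; in particular d(q, g^j(q)) ≤ R/η for every integer j with |j| ≤ N. (This is part (2) of Lemma 3.8 of the paper, with the almost-subgroup def ect measured by the one-sided Hausdorff excess.) -/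
/-- Lemma 3.8(2) of the paper: if the symmetric set `A_N = {g^m : |m| ≤ N}`
satisfies the no-`η`-almost-subgroup condition at `q` (measured with the
one-sided Hausdorff excess) and `d(q, g^N q) ≤ R`, then the orbit `A_N·q`
has diameter at most `R/η`. -/
theorem no_small_almost_subgroup_diam_bound {Y : Type*} [MetricSpace Y]
    (g : Y ≃ᵢ Y) (q : Y) (η R : ℝ) (hη : 0 < η) (hR : 0 ≤ R)
    (N : ℕ) (hN : 0 < N)
    (hdisp : dist q ((g ^ (N : ℤ)) q) ≤ R)
    (hns : ∃ i : ℤ, |i| ≤ (N : ℤ) ∧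
      η * Metric.diam {y : Y | ∃ m : ℤ, |m| ≤ (N : ℤ) ∧ y = (g ^ m) q}
        ≤ Metric.infDist ((g ^ (2 * i)) q)
            {y : Y | ∃ m : ℤ, |m| ≤ (N : ℤ) ∧ y = (g ^ m) q}) :
    Metric.diam {y : Y | ∃ m : ℤ, |m| ≤ (N : ℤ) ∧ y = (g ^ m) q} ≤ R / η ∧
    ∀ j : ℤ, |j| ≤ (N : ℤ) → dist q ((g ^ j) q) ≤ R / η := by
  have hd : ∀ m : ℤ, dist ((g ^ (m + N)) q) ((g ^ m) q) ≤ R := by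
    intro m
    rw [zpow_add, IsometryEquiv.mul_apply, (g ^ m).isometry.dist_eq, dist_comm]
    exact hdisp
  set S : Set Y := {y : Y | ∃ m : ℤ, |m| ≤ (N : ℤ) ∧ y = (g ^ m) q} with hS
  have hdiam : Metric.diam S ≤ R / η := by
    obtain ⟨i, hi, h⟩ := hns
    rw [le_div_iff₀ hη, mul_comm]
    refine h.trans ?_
    rw [abs_le] at hi
    rcases le_total 0 i with h0 | h0
    · have hmem : (g ^ (2 * i - N)) q ∈ S := ⟨2 * i - N, by rw [abs_le]; constructor <;> omega, rfl⟩
      refine (Metric.infDist_le_dist_of_mem hmem).trans ?_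
      have := hd (2 * i - N)
      rwa [sub_add_cancel] at this
    · have hmem : (g ^ (2 * i + N)) q ∈ S := ⟨2 * i + N, by rw [abs_le]; constructor <;> omega, rfl⟩
      refine (Metric.infDist_le_dist_of_mem hmem).trans ?_
      rw [dist_comm]
      exact hd (2 * i)
  refine ⟨hdiam, fun j hj => ?_⟩
  have hfin : S.Finite := by
    refine ((Set.finite_Icc (-(N : ℤ)) N).image (fun m : ℤ => (g ^ m) q)).subset ?_
    rintro y ⟨m, hm, rfl⟩
    exact ⟨m, abs_le.mp hm, rfl⟩
  have hq : q ∈ S := ⟨0, by simp, by simp⟩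
  exact (Metric.dist_le_diam_of_mem hfin.isBounded hq ⟨j, hj, rfl⟩).trans hdiam
end

section
/- Let E be a finite-dimensional real inner product space and let A be a linear isometric automorphism of E. If the operator norm ‖Aᵐ − id‖ is at most 1 for every positive integer m, then A = id. (This is the linear-algebra step behind the claim, used in the paper, that the isometry group of Euclidean space has no nontrivial subgroup of displacement at most 1/20 on the unit ball.) -/
/-- A linear isometric automorphism of a finite-dimensional real inner product
space all of whose powers are within operator-norm distance `1` of the
identity is the identity. -/
theorem linear_isometry_powers_near_id {E : Type*} [NormedAddCommGroup E]
    [InnerProductSpace ℝ E] [FiniteDimensional ℝ E]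
    (A : E ≃ₗᵢ[ℝ] E)
    (h : ∀ m : ℕ, 0 < m →
      ‖(A ^ m).toLinearIsometry.toContinuousLinearMap - ContinuousLinearMap.id ℝ E‖ ≤ 1) :
    A = LinearIsometryEquiv.refl ℝ E := by
  have hb : ∀ (m : ℕ) (x : E), ‖(A ^ m) x - x‖ ≤ ‖x‖ := by
    intro m x
    rcases Nat.eq_zero_or_pos m with rfl | hm
    · simp
    · have h1 := ContinuousLinearMap.le_of_opNorm_le _ (h m hm) x
      simpa using h1
  have hi : ∀ (m : ℕ) (x : E), ‖x‖ ^ 2 / 2 ≤ inner ℝ ((A ^ m) x) x := by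
    intro m x
    have h1 := hb m x
    have h2 := norm_sub_sq_real ((A ^ m) x) x
    have h3 : ‖(A ^ m) x‖ = ‖x‖ := (A ^ m).norm_map x
    rw [h3] at h2
    have h4 : ‖(A ^ m) x - x‖ ^ 2 ≤ ‖x‖ ^ 2 := by gcongr
    linarith
  ext y
  rw [LinearIsometryEquiv.coe_refl, id]
  by_contra hne
  have hx : 0 < ‖A y - y‖ := norm_pos_iff.mpr (sub_ne_zero.mpr hne)
  have hs : ∀ N : ℕ, N * (‖A y - y‖ ^ 2 / 2) ≤ inner ℝ ((A ^ N) y - y) (A y - y) := by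
    intro N
    induction N with
    | zero => simp
    | succ n ih =>
      have h1 := hi n (A y - y)
      have h2 : (A ^ (n + 1)) y - y = ((A ^ n) y - y) + (A ^ n) (A y - y) := by
        rw [map_sub, pow_succ, LinearIsometryEquiv.coe_mul, Function.comp_apply]
        abel
      rw [h2, inner_add_left]
      push_cast
      linarith
  obtain ⟨N, hN⟩ := exists_nat_gt (‖y‖ * ‖A y - y‖ / (‖A y - y‖ ^ 2 / 2))
  rw [div_lt_iff₀ (by positivity)] at hN
  have h1 := real_inner_le_norm ((A ^ N) y - y) (A y - y)
  have h2 := mul_le_mul_of_nonneg_right (hb N y) hx.le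
  linarith [hs N]
end

section
/- Let X be a metric space, p ∈ X, λ > 0, and let A be a nonempty set of isometries of X (distance-preserving maps of X to itself). For r > 0, let D_{r,p}(A) := sup{ d(f(q), q) : f ∈ A, q ∈ B_r(p) }, the displacement of A on the open ball B_r(p). Assume that sup{ d(f(p), p) : f ∈ A } > 0 and that d(f(q), q) ≤ λ for every f ∈ A and every q ∈ B_1(p). Then there exists r ∈ (0, 1] such that D_{r,p}(A) = λ·r and D_{θ,p}(A) > λ·θ for every θ ∈ (0, r). (This is the critical-rescaling claim, obtained 'by the intermediate value theorem', used repeatedly in the proofs of Theorem 0.4, Proposition 2.7 and Proposition 2.9 of the paper.) -/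
/-- Critical rescaling via the intermediate value theorem: if a nonempty set
`A` of isometries of `X` has positive displacement at `p` and displacement at
most `λ` on the unit ball `B₁(p)`, then there is a critical radius
`r ∈ (0, 1]` with `D_{r,p}(A) = λ·r` and `D_{θ,p}(A) > λ·θ` for all
`θ ∈ (0, r)`.  (Used repeatedly in the proofs of Theorem 0.4, Proposition 2.7
and Proposition 2.9 of the paper.) -/
theorem critical_rescaling {X : Type*} [MetricSpace X] (p : X)
    (lam : ℝ) (hlam : 0 < lam)
    (A : Set (X → X)) (hA : A.Nonempty) (hiso : ∀ f ∈ A, Isometry f)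
    (hpos : 0 < sSup {d : ℝ | ∃ f ∈ A, d = dist (f p) p})
    (hbd : ∀ f ∈ A, ∀ q ∈ Metric.ball p 1, dist (f q) q ≤ lam) :
    ∃ r ∈ Set.Ioc (0 : ℝ) 1,
      sSup {d : ℝ | ∃ f ∈ A, ∃ q ∈ Metric.ball p r, d = dist (f q) q} = lam * r ∧
      ∀ θ ∈ Set.Ioo (0 : ℝ) r,
        lam * θ < sSup {d : ℝ | ∃ f ∈ A, ∃ q ∈ Metric.ball p θ, d = dist (f q) q} := by
  classical
  set D : ℝ → ℝ := fun r =>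
    sSup {d : ℝ | ∃ f ∈ A, ∃ q ∈ Metric.ball p r, d = dist (f q) q} with hD
  have hbdd : ∀ s : ℝ, s ≤ 1 →
      BddAbove {d : ℝ | ∃ f ∈ A, ∃ q ∈ Metric.ball p s, d = dist (f q) q} := by
    rintro s hs
    refine ⟨lam, ?_⟩
    rintro d ⟨f, hf, q, hq, rfl⟩
    exact hbd f hf q (Metric.ball_subset_ball hs hq)
  obtain ⟨f₀, hf₀⟩ := hA
  have hne : ∀ s : ℝ, 0 < s →
      {d : ℝ | ∃ f ∈ A, ∃ q ∈ Metric.ball p s, d = dist (f q) q}.Nonempty :=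
    fun s hs => ⟨_, f₀, hf₀, p, Metric.mem_ball_self hs, rfl⟩
  have hmono : ∀ s t : ℝ, 0 < s → s ≤ t → t ≤ 1 → D s ≤ D t := by
    intro s t hs hst ht
    refine csSup_le_csSup (hbdd t ht) (hne s hs) ?_
    rintro d ⟨f, hf, q, hq, rfl⟩
    exact ⟨f, hf, q, Metric.ball_subset_ball hst hq, rfl⟩
  set c := sSup {d : ℝ | ∃ f ∈ A, d = dist (f p) p} with hc
  have hcD : ∀ s : ℝ, 0 < s → s ≤ 1 → c ≤ D s := by
    intro s hs hs1
    refine csSup_le_csSup (hbdd s hs1) ⟨_, f₀, hf₀, rfl⟩ ?_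
    rintro d ⟨f, hf, rfl⟩
    exact ⟨f, hf, p, Metric.mem_ball_self hs, rfl⟩
  set S : Set ℝ := {s | 0 < s ∧ s ≤ 1 ∧ D s ≤ lam * s} with hS
  have h1 : (1 : ℝ) ∈ S := by
    refine ⟨one_pos, le_rfl, ?_⟩
    rw [mul_one]
    refine csSup_le (hne 1 one_pos) ?_
    rintro d ⟨f, hf, q, hq, rfl⟩
    exact hbd f hf q hq
  have hSb : BddBelow S := ⟨0, fun s hs => hs.1.le⟩
  have hr0 : 0 < sInf S := by
    refine lt_of_lt_of_le (div_pos hpos hlam) (le_csInf ⟨1, h1⟩ ?_)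
    rintro s ⟨hs, hs1, hsD⟩
    rw [div_le_iff₀ hlam]
    linarith [hcD s hs hs1]
  have hr1 : sInf S ≤ 1 := csInf_le hSb h1
  have hlt : ∀ θ ∈ Set.Ioo (0 : ℝ) (sInf S), lam * θ < D θ := by
    rintro θ ⟨hθ, hθr⟩
    by_contra hcon
    exact absurd (csInf_le hSb ⟨hθ, by linarith, not_lt.mp hcon⟩) (not_le.mpr hθr)
  refine ⟨sInf S, ⟨hr0, hr1⟩, le_antisymm ?_ ?_, hlt⟩
  · change D (sInf S) ≤ lam * sInf S
    rw [← div_le_iff₀' hlam]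
    refine le_csInf ⟨1, h1⟩ ?_
    intro s hs
    rw [div_le_iff₀' hlam]
    exact (hmono _ _ hr0 (csInf_le hSb hs) hs.2.1).trans hs.2.2
  · change lam * sInf S ≤ D (sInf S)
    rw [← le_div_iff₀' hlam]
    refine le_of_forall_lt_imp_le_of_dense ?_
    intro a ha
    rw [le_div_iff₀' hlam]
    rcases le_or_gt a 0 with h | h
    · have := hcD _ hr0 hr1
      nlinarith
    · exact (hlt a ⟨h, ha⟩).le.trans (hmono _ _ h ha.le hr1)
end

section
/- Let V be a metric space, let Φ : V × [0, ∞) → ℝ be continuous, and let R > 0 be such that Φ(v, 0) < R for every v ∈ V. Assume divergence uniformly on compact sets: for every compact K ⊆ V and every M ∈ ℝ there exists T ≥ 0 with Φ(v, t) > M for all v ∈ K and all t ≥ T. Then for every v ∈ V the set {t ≥ 0 : Φ(v, t) = R} is nonempty, bounded and closed (so it has a maximum), and the function F(v) := sup{ t ≥ 0 : Φ(v, t) = R } is upper semicontinuous on V. (This is the upper semicontinuity of the last-crossing-time function F_{r,R}(v) = sup{t > 0 : d((t v)·p, p) = R} established in the proof of Lemma 3.9 of the paper.) -/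
/-- Upper semicontinuity of the last-crossing-time function
`F(v) = sup{t ≥ 0 : Φ(v,t) = R}` from the proof of Lemma 3.9 of the paper:
if `Φ` is continuous on `V × [0,∞)`, starts below `R`, and diverges uniformly
on compact subsets of `V`, then for each `v` the set `{t ≥ 0 : Φ(v,t) = R}`
is nonempty, bounded and closed (hence has a maximum) and `F` is upper
semicontinuous. -/
theorem last_crossing_time_usc {V : Type*} [MetricSpace V] (Φ : V → ℝ → ℝ)
    (hcont : ContinuousOn (fun p : V × ℝ => Φ p.1 p.2) (Set.univ ×ˢ Set.Ici (0 : ℝ)))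
    (R : ℝ) (hR : 0 < R) (h0 : ∀ v : V, Φ v 0 < R)
    (hdiv : ∀ K : Set V, IsCompact K → ∀ M : ℝ, ∃ T : ℝ, 0 ≤ T ∧
      ∀ v ∈ K, ∀ t : ℝ, T ≤ t → M < Φ v t) :
    (∀ v : V, ({t : ℝ | 0 ≤ t ∧ Φ v t = R}).Nonempty ∧
      BddAbove {t : ℝ | 0 ≤ t ∧ Φ v t = R} ∧
      IsClosed {t : ℝ | 0 ≤ t ∧ Φ v t = R} ∧
      sSup {t : ℝ | 0 ≤ t ∧ Φ v t = R} ∈ {t : ℝ | 0 ≤ t ∧ Φ v t = R}) ∧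
    UpperSemicontinuous (fun v : V => sSup {t : ℝ | 0 ≤ t ∧ Φ v t = R}) := by
  have hc : Continuous (fun p : V × ℝ => Φ p.1 (max p.2 0)) := by
    have hm : Continuous (fun p : V × ℝ => ((p.1, max p.2 0) : V × ℝ)) := by fun_prop
    exact hcont.comp_continuous hm (fun p => ⟨Set.mem_univ _, Set.mem_Ici.2 (le_max_right _ _)⟩)
  have hset : ∀ v : V, {t : ℝ | 0 ≤ t ∧ Φ v t = R}
      = {t : ℝ | 0 ≤ t ∧ Φ v (max t 0) = R} := by
    intro v
    ext t
    constructor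
    · rintro ⟨h, h'⟩
      exact ⟨h, by rwa [max_eq_left h]⟩
    · rintro ⟨h, h'⟩
      exact ⟨h, by rwa [max_eq_left h] at h'⟩
  have hcv : ∀ v : V, Continuous (fun t : ℝ => Φ v (max t 0)) := fun v =>
    hc.comp (by fun_prop : Continuous (fun t : ℝ => ((v, t) : V × ℝ)))
  have main : ∀ v : V, ({t : ℝ | 0 ≤ t ∧ Φ v t = R}).Nonempty ∧
      BddAbove {t : ℝ | 0 ≤ t ∧ Φ v t = R} ∧
      IsClosed {t : ℝ | 0 ≤ t ∧ Φ v t = R} := by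
    intro v
    obtain ⟨T, hT0, hT⟩ := hdiv {v} isCompact_singleton R
    have hT := hT v rfl
    refine ⟨?_, ⟨T, ?_⟩, ?_⟩
    · have h1 : R ∈ Set.Icc (Φ v (max 0 0)) (Φ v (max T 0)) := by
        rw [max_self, max_eq_left hT0]
        exact ⟨(h0 v).le, (hT T le_rfl).le⟩
      obtain ⟨t, ht, h⟩ := intermediate_value_Icc hT0 (hcv v).continuousOn h1
      rw [hset v]
      exact ⟨t, ht.1, h⟩
    · rintro t ⟨_, h⟩
      by_contra hlt
      exact absurd (hT t (not_le.1 hlt).le) (by rw [h]; exact lt_irrefl _)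
    · rw [hset v]
      exact isClosed_Ici.inter (isClosed_eq (hcv v) continuous_const)
  have hmem : ∀ v : V,
      sSup {t : ℝ | 0 ≤ t ∧ Φ v t = R} ∈ {t : ℝ | 0 ≤ t ∧ Φ v t = R} := fun v =>
    (main v).2.2.csSup_mem (main v).1 (main v).2.1
  refine ⟨fun v => ⟨(main v).1, (main v).2.1, (main v).2.2, hmem v⟩, ?_⟩
  rw [upperSemicontinuous_iff_isClosed_preimage]
  intro y
  apply IsSeqClosed.isClosed
  intro x a hx hxa
  obtain ⟨T, hT0, hT⟩ := hdiv _ hxa.isCompact_insert_range R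
  have hI : ∀ n, sSup {t : ℝ | 0 ≤ t ∧ Φ (x n) t = R} ∈ Set.Icc 0 T := by
    intro n
    refine ⟨(hmem (x n)).1, ?_⟩
    by_contra hlt
    have h := hT (x n) (Set.mem_insert_of_mem _ ⟨n, rfl⟩) _ (not_le.1 hlt).le
    rw [(hmem (x n)).2] at h
    exact lt_irrefl _ h
  obtain ⟨s, hs, φ, hφ, hlim⟩ := isCompact_Icc.tendsto_subseq hI
  have hys : y ≤ s := ge_of_tendsto' hlim (fun n => hx (φ n))
  have hl := (hc.tendsto (a, s)).comp ((hxa.comp hφ.tendsto_atTop).prodMk_nhds hlim)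
  have hR' : Φ a (max s 0) = R := by
    refine tendsto_nhds_unique hl (tendsto_const_nhds.congr fun n => ?_)
    have h := hmem (x (φ n))
    simp only [Function.comp]
    rw [max_eq_left h.1]
    exact h.2.symm
  rw [max_eq_left hs.1] at hR'
  exact hys.trans (le_csSup (main a).2.1 ⟨hs.1, hR'⟩)
end
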